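/- Let f, g : ℝⁿ → ℝ be smooth functions which, together with all their derivatives, grow at most polynomially. For q ∈ ℝⁿ set f̄_Δt(q) = E_{G,U}[f(δ_Δt(q,G,U))] and ḡ_Δt(q) = E_{G,U}[g(δ_Δt(q,G,U))]. Then there exist C ≥ 0 and Δt* > 0 such that for all 0 < Δt ≤ Δt* and all q ∈ ℝⁿ, |Δt⁻¹ E_{G,U}[(f(δ_Δt(q,G,U)) − f̄_Δt(q)) (g(δ_Δt(q,G,U)) − ḡ_Δt(q))] − 2 ∇f(0)·∇g(0)| ≤ C Δt. -/

import Mathlib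

/-!
Write `d = -dt ∇V(q) + √(2dt) G` for the proposed increment, `r` for its acceptance probability,
`W = f(d) - f(0)` and `Z = g(d) - g(0)`. A rejected step contributes `f(0)` and `g(0)`, so after
averaging over the uniform variable and centring at these values the covariance is exactly
`E[r W Z] - E[r W] E[r Z]` (`obscov_eq`). It remains to expand the three expectations, uniformly
in `q`.

* Rejection is rare: by periodicity `∇V` is bounded and Lipschitz, and the logarithm of the
  Metropolis ratio is a trapezoidal quadrature error for `V` along the move plus
  `dt/4 (|∇V(q)|² - |∇V(q')|²)`. Hence `1 - r` is `O(dt)` up to a polynomial factor in `G`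
  (`one_sub_Rk_le`, `metroStep_mala`). The sharper order `dt^(3/2)` is not needed.
* Each mean is `O(dt)`: the linear Taylor term of `W` has mean `-dt ∇f(0)·∇V(q)`, since the noise
  is centred, and everything else is `O(dt)` (`MetroStep.abs_mean_le`). The product of the two
  means is therefore `O(dt²)`.
* `E[r W Z] = 2 dt ∇f(0)·∇g(0) + O(dt²)`: since `W Z = O(dt)`, replacing `r` by `1` costs `O(dt²)`;
  the quadratic part of `W Z` gives the leading term, and the cubic part, the only one of order
  `dt^(3/2)`, is odd in the noise up to `O(dt²)` and so averages to zero
  (`MetroStep.abs_second_moment_le`).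

All error terms carry polynomial factors in `|G|`, which are Gaussian-integrable.
-/

open MeasureTheory RealInnerProductSpace

noncomputable section

abbrev En (n : ℕ) := EuclideanSpace ℝ (Fin n)

/-- Gaussian proposal density of the Euler–Maruyama scheme. -/
def Tker {n : ℕ} (V : En n → ℝ) (dt : ℝ) (q q' : En n) : ℝ :=
  (4 * Real.pi * dt) ^ (-(n : ℝ) / 2) *
    Real.exp (-‖q' - q + dt • gradient V q‖ ^ 2 / (4 * dt))

/-- Metropolis acceptance probability. -/
def Rk {n : ℕ} (V : En n → ℝ) (dt : ℝ) (q q' : En n) : ℝ :=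
  min 1 (Real.exp (-V q') * Tker V dt q' q / (Real.exp (-V q) * Tker V dt q q'))

/-- proposal move -/
def propMove {n : ℕ} (V : En n → ℝ) (dt : ℝ) (q g : En n) : En n :=
  q - dt • gradient V q + Real.sqrt (2 * dt) • g

def xi {n : ℕ} (V : En n → ℝ) (q g : En n) : ℝ :=
  -(Real.sqrt 2 / 6) * iteratedFDeriv ℝ 3 V q (fun _ => g) +
    (Real.sqrt 2 / 2) * ⟪gradient V q, fderiv ℝ (gradient V) q g⟫

def xiPlus {n : ℕ} (V : En n → ℝ) (q g : En n) : ℝ := max (xi V q g) 0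

/-- standard Gaussian measure on ℝⁿ -/
def gauss (n : ℕ) : Measure (En n) :=
  volume.withDensity fun g =>
    ENNReal.ofReal ((2 * Real.pi) ^ (-(n : ℝ) / 2) * Real.exp (-‖g‖ ^ 2 / 2))

/-- fundamental domain of the torus -/
def Box (n : ℕ) (L : ℝ) : Set (En n) := {q | ∀ i, q i ∈ Set.Ico (0 : ℝ) L}

/-- integral with respect to the Gibbs measure μ on the torus M -/
def muInt {n : ℕ} (V : En n → ℝ) (L : ℝ) (f : En n → ℝ) : ℝ :=
  (∫ q in Box n L, Real.exp (-V q))⁻¹ * ∫ q in Box n L, f q * Real.exp (-V q)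

/-- Laplacian -/
def lap {n : ℕ} (ψ : En n → ℝ) (q : En n) : ℝ :=
  ∑ i, iteratedFDeriv ℝ 2 ψ q (fun _ => EuclideanSpace.single i (1 : ℝ))

/-- generator of the overdamped Langevin dynamics -/
def gen {n : ℕ} (V ψ : En n → ℝ) (q : En n) : ℝ :=
  -⟪gradient V q, gradient ψ q⟫ + lap ψ q

/-- MALA transition operator on periodic functions -/
def Pmala {n : ℕ} (V : En n → ℝ) (dt : ℝ) (f : En n → ℝ) (q : En n) : ℝ :=
  f q + ∫ q', Rk V dt q q' * Tker V dt q q' * (f q' - f q)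

/-- the operator D₁ -/
def D1op {n : ℕ} (V ψ : En n → ℝ) (q : En n) : ℝ :=
  2 * ∑ i, ∑ j, (iteratedFDeriv ℝ 2 V q ![EuclideanSpace.single i (1:ℝ), EuclideanSpace.single j (1:ℝ)]) *
      (iteratedFDeriv ℝ 2 ψ q ![EuclideanSpace.single i (1:ℝ), EuclideanSpace.single j (1:ℝ)])
    + ⟪gradient (fun x => lap V x) q, gradient ψ q⟫
    - ⟪gradient V q, fderiv ℝ (gradient V) q (gradient ψ q)⟫

/-- the operator D₂ -/
def D2op {n : ℕ} (V ψ : En n → ℝ) (q : En n) : ℝ :=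
  -Real.sqrt 2 * ⟪∫ g, xiPlus V q g • g ∂(gauss n), gradient ψ q⟫

/-- the operator A appearing in the expansion of the MALA evolution operator -/
def Aop {n : ℕ} (V ψ : En n → ℝ) (q : En n) : ℝ :=
  (gen V (gen V ψ) q + D1op V ψ q + D2op V ψ q) / 2

/-- Metropolized increment -/
def deltaInc {n : ℕ} (V : En n → ℝ) (dt : ℝ) (q g : En n) (u : ℝ) : En n :=
  if u ≤ Rk V dt q (propMove V dt q g) then (-dt) • gradient V q + Real.sqrt (2 * dt) • g
  else 0

/-- expectation over G (std Gaussian) and U (uniform on [0,1]) of the increment -/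
def EguDelta {n : ℕ} (V : En n → ℝ) (dt : ℝ) (q : En n) : En n :=
  ∫ g, (∫ u in Set.Icc (0 : ℝ) 1, deltaInc V dt q g u) ∂(gauss n)


/-- average of an observable of the Metropolized increment over G and U -/
def obsbar {n : ℕ} (V : En n → ℝ) (dt : ℝ) (f : En n → ℝ) (q : En n) : ℝ :=
  ∫ g, (∫ u in Set.Icc (0 : ℝ) 1, f (deltaInc V dt q g u)) ∂(gauss n)

/-- covariance of two observables of the Metropolized increment -/
def obscov {n : ℕ} (V : En n → ℝ) (dt : ℝ) (f g : En n → ℝ) (q : En n) : ℝ :=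
  ∫ g', (∫ u in Set.Icc (0 : ℝ) 1,
    (f (deltaInc V dt q g' u) - obsbar V dt f q) *
      (g (deltaInc V dt q g' u) - obsbar V dt g q)) ∂(gauss n)

/-! ### The standard Gaussian measure -/

theorem gauss_eq_stdGaussian (n : ℕ) : gauss n = ProbabilityTheory.stdGaussian (En n) := by
  have hdens : Integrable (fun g : En n =>
      (2 * Real.pi) ^ (-(n : ℝ) / 2) * Real.exp (-‖g‖ ^ 2 / 2)) := by
    have h := (GaussianFourier.integrable_cexp_neg_mul_sq_norm_add (b := (1 / 2 : ℂ))
      (by norm_num) 0 (0 : En n)).re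
    refine Integrable.const_mul (h.congr (Filter.Eventually.of_forall fun g => ?_)) _
    simp only [zero_mul, add_zero]
    rw [show (-(1 / 2 : ℂ) * (‖g‖ : ℂ) ^ 2) = ((-‖g‖ ^ 2 / 2 : ℝ) : ℂ) by push_cast; ring]
    exact Complex.exp_ofReal_re _
  have : IsFiniteMeasure (gauss n) :=
    isFiniteMeasure_withDensity_ofReal hdens.hasFiniteIntegral
  apply Measure.ext_of_charFun
  ext t
  rw [ProbabilityTheory.charFun_stdGaussian, charFun_apply, gauss,
    integral_withDensity_eq_integral_toReal_smul (by fun_prop) (by simp)]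
  have h := GaussianFourier.integral_cexp_neg_mul_sq_norm_add (b := (1 / 2 : ℂ))
    (by norm_num) Complex.I t
  have hpos : (0 : ℝ) < 2 * Real.pi := by positivity
  calc ∫ x : En n, (ENNReal.ofReal ((2 * Real.pi) ^ (-(n : ℝ) / 2) *
        Real.exp (-‖x‖ ^ 2 / 2))).toReal • Complex.exp (⟪x, t⟫ * Complex.I)
      = ∫ x : En n, (((2 * Real.pi) ^ (-(n : ℝ) / 2) : ℝ) : ℂ) *
        Complex.exp (-(1 / 2 : ℂ) * ‖x‖ ^ 2 + Complex.I * ⟪t, x⟫) := by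
        congr 1
        ext x
        rw [ENNReal.toReal_ofReal (by positivity), Complex.exp_add, Complex.real_smul]
        push_cast
        rw [real_inner_comm, mul_comm Complex.I, mul_assoc,
          show (-(1 / 2 : ℂ) * (‖x‖ : ℂ) ^ 2) = -(‖x‖ : ℂ) ^ 2 / 2 by ring]
    _ = _ := by
        rw [integral_const_mul, h, ← mul_assoc]
        have h1 : (Real.pi / (1 / 2) : ℂ) = ((2 * Real.pi : ℝ) : ℂ) := by
          push_cast; ring
        have h2 : ((Module.finrank ℝ (En n) : ℂ) / 2) = (((n : ℝ) / 2 : ℝ) : ℂ) := by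
          simp
        rw [h1, h2, ← Complex.ofReal_cpow hpos.le, ← Complex.ofReal_mul, ← Real.rpow_add hpos,
          show -(n : ℝ) / 2 + n / 2 = 0 by ring, Real.rpow_zero]
        rw [Complex.ofReal_one, one_mul, Complex.I_sq]
        congr 1
        ring

instance (n : ℕ) : IsProbabilityMeasure (gauss n) := by
  rw [gauss_eq_stdGaussian]; infer_instance

theorem integrable_gauss_moment (n m : ℕ) :
    Integrable (fun x : En n => (1 + ‖x‖) ^ m) (gauss n) := by
  rw [gauss_eq_stdGaussian]
  have h0 : MemLp (fun x : En n => ‖x‖) (m : ENNReal) (ProbabilityTheory.stdGaussian (En n)) :=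
    MemLp.norm (f := id) (ProbabilityTheory.IsGaussian.memLp_id _ _ (ENNReal.natCast_ne_top m))
  have h : MemLp (fun x : En n => 1 + ‖x‖) (m : ENNReal)
      (ProbabilityTheory.stdGaussian (En n)) := (memLp_const (1 : ℝ)).add h0
  refine (h.integrable_norm_pow').congr (Filter.Eventually.of_forall fun x => ?_)
  simp only [Real.norm_eq_abs]
  rw [abs_of_nonneg (by positivity)]

/-- The Gaussian measure is invariant under `x ↦ -x`. -/
theorem integral_gauss_odd {n : ℕ} (F : En n → ℝ) (hF : ∀ x, F (-x) = -F x) :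
    ∫ x, F x ∂(gauss n) = 0 := by
  have hmap : (gauss n).map (LinearIsometryEquiv.neg ℝ : En n ≃ₗᵢ[ℝ] En n) = gauss n := by
    rw [gauss_eq_stdGaussian]
    exact ProbabilityTheory.stdGaussian_map _
  have h : ∫ x, F x ∂(gauss n) = ∫ x, F (-x) ∂(gauss n) := by
    conv_lhs => rw [← hmap]
    exact (LinearIsometryEquiv.neg ℝ :
      En n ≃ₗᵢ[ℝ] En n).toHomeomorph.measurableEmbedding.integral_map F
  simp only [hF, integral_neg] at h
  linarith

theorem integral_gauss_inner_mul_inner {n : ℕ} (a b : En n) :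
    ∫ x, ⟪a, x⟫ * ⟪b, x⟫ ∂(gauss n) = ⟪a, b⟫ := by
  have h := ProbabilityTheory.covarianceBilin_apply_eq_cov
    (μ := ProbabilityTheory.stdGaussian (En n)) ProbabilityTheory.IsGaussian.memLp_two_id a b
  rw [ProbabilityTheory.covarianceBilin_stdGaussian, ProbabilityTheory.covariance,
    ← gauss_eq_stdGaussian] at h
  rw [integral_gauss_odd (fun x => ⟪a, x⟫) (by simp),
    integral_gauss_odd (fun x => ⟪b, x⟫) (by simp)] at h
  simp only [sub_zero] at h
  rw [← h]
  rfl

/-! ### Taylor expansion of the observables -/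

/-- Integrating a growth bound on the derivative gains one power of `‖x‖`. -/
theorem norm_le_of_fderiv_growth {E X : Type*} [NormedAddCommGroup E] [NormedSpace ℝ E]
    [NormedAddCommGroup X] [NormedSpace ℝ X] {F : E → X}
    (hF : Differentiable ℝ F) (h0 : F 0 = 0) {C : ℝ} {k m : ℕ} (hC : 0 ≤ C)
    (h : ∀ y, ‖fderiv ℝ F y‖ ≤ C * ‖y‖ ^ k * (1 + ‖y‖) ^ m) (x : E) :
    ‖F x‖ ≤ C * ‖x‖ ^ (k + 1) * (1 + ‖x‖) ^ m := by
  have h1 := (convex_closedBall (0 : E) ‖x‖).norm_image_sub_le_of_norm_fderiv_le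
    (𝕜 := ℝ) (f := F) (C := C * ‖x‖ ^ k * (1 + ‖x‖) ^ m) (x := 0) (y := x)
    (fun y _ => hF y) (fun y hy => (h y).trans (by
      have hy' : ‖y‖ ≤ ‖x‖ := by simpa using hy
      gcongr)) (by simp) (by simp)
  rw [h0, sub_zero, sub_zero] at h1
  calc ‖F x‖ ≤ _ := h1
    _ = _ := by ring

theorem norm_sub_le_of_growth {E X : Type*} [NormedAddCommGroup E] [NormedSpace ℝ E]
    [NormedAddCommGroup X] [NormedSpace ℝ X] {F : E → X}
    (hF : Differentiable ℝ F) {C : ℝ} {m : ℕ} (hC : 0 ≤ C)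
    (h : ∀ y, ‖iteratedFDeriv ℝ 1 F y‖ ≤ C * (1 + ‖y‖) ^ m) (x : E) :
    ‖F x - F 0‖ ≤ C * ‖x‖ ^ 1 * (1 + ‖x‖) ^ m := by
  refine norm_le_of_fderiv_growth (F := fun x => F x - F 0) (k := 0) (hF.sub_const (F 0))
    (by simp) hC (fun y => ?_) x
  rw [fderiv_sub_const, pow_zero, mul_one, ← norm_iteratedFDeriv_one]
  exact h y

/-- Second-order Taylor data at the origin for an observable of polynomial growth: `l` and `Q` are
the first and second derivatives of `f` at `0`, and the Taylor remainders of orders one, two and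
three are controlled by the corresponding powers of `‖x‖` up to a polynomial factor. -/
structure TaylorBound {E : Type*} [NormedAddCommGroup E] [NormedSpace ℝ E]
    (f : E → ℝ) (l : E →L[ℝ] ℝ) (Q : E →L[ℝ] E →L[ℝ] ℝ)
    (K : ℝ) (m : ℕ) : Prop where
  nonneg : 0 ≤ K
  norm_l : ‖l‖ ≤ K
  norm_Q : ‖Q‖ ≤ K
  first : ∀ x, |f x - f 0| ≤ K * ‖x‖ * (1 + ‖x‖) ^ m
  second : ∀ x, |f x - f 0 - l x| ≤ K * ‖x‖ ^ 2 * (1 + ‖x‖) ^ m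
  third : ∀ x, |f x - f 0 - l x - 1 / 2 * Q x x| ≤ K * ‖x‖ ^ 3 * (1 + ‖x‖) ^ m

theorem abs_quad_le {E : Type*} [NormedAddCommGroup E] [NormedSpace ℝ E]
    (Q : E →L[ℝ] E →L[ℝ] ℝ) (x y : E) :
    |Q x y| ≤ ‖Q‖ * ‖x‖ * ‖y‖ := Q.le_opNorm₂ x y

/-- The third-order remainder bound comes from integrating the growth bound on the third derivative
three times; the lower-order bounds follow from it by the triangle inequality. -/
theorem exists_taylorBound {E : Type*} [NormedAddCommGroup E] [NormedSpace ℝ E]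
    (f : E → ℝ) (hf : ContDiff ℝ (⊤ : ℕ∞) f)
    (hgrowth : ∀ k : ℕ, ∃ (Ck : ℝ) (m : ℕ), ∀ x : E,
      ‖iteratedFDeriv ℝ k f x‖ ≤ Ck * (1 + ‖x‖) ^ m) :
    ∃ K m, TaylorBound f (fderiv ℝ f 0) (fderiv ℝ (fderiv ℝ f) 0) K m := by
  obtain ⟨C, m, hC⟩ := hgrowth 3
  have hC0 : 0 ≤ C := by
    have := (norm_nonneg _).trans (hC 0)
    simpa using this
  have hf1 : ContDiff ℝ (⊤ : ℕ∞) (fderiv ℝ f) := hf.fderiv_right (by simp)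
  have hf2 : ContDiff ℝ (⊤ : ℕ∞) (fderiv ℝ (fderiv ℝ f)) := hf1.fderiv_right (by simp)
  have hd0 : Differentiable ℝ f := hf.differentiable (by simp)
  have hd1 : Differentiable ℝ (fderiv ℝ f) := hf1.differentiable (by simp)
  have hd2 : Differentiable ℝ (fderiv ℝ (fderiv ℝ f)) := hf2.differentiable (by simp)
  set l := fderiv ℝ f 0 with hl
  set Q := fderiv ℝ (fderiv ℝ f) 0 with hQ
  have hsymm : ∀ x y, Q x y = Q y x := by
    have h : IsSymmSndFDerivAt ℝ f 0 := hf.contDiffAt.isSymmSndFDerivAt (by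
      rw [minSmoothness_of_isRCLikeNormedField]
      exact WithTop.coe_le_coe.2 le_top)
    exact fun x y => h x y
  -- Successive integration from the third derivative down to `f`.
  have s2 : ∀ x, ‖fderiv ℝ (fderiv ℝ f) x - Q‖ ≤ C * ‖x‖ ^ 1 * (1 + ‖x‖) ^ m :=
    norm_sub_le_of_growth (E := E) (F := fderiv ℝ (fderiv ℝ f)) hd2 hC0 fun y => by
      rw [norm_iteratedFDeriv_fderiv (𝕜 := ℝ) (f := fderiv ℝ f) (n := 1),
        norm_iteratedFDeriv_fderiv (𝕜 := ℝ) (f := f) (n := 2)]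
      exact hC y
  have s1 : ∀ x, ‖fderiv ℝ f x - l - Q x‖ ≤ C * ‖x‖ ^ 2 * (1 + ‖x‖) ^ m :=
    norm_le_of_fderiv_growth (F := fun x => fderiv ℝ f x - l - Q x)
      ((hd1.sub_const l).sub Q.differentiable) (by simp [hl]) hC0 (by
        intro y
        have : HasFDerivAt (fun x => fderiv ℝ f x - l - Q x) (fderiv ℝ (fderiv ℝ f) y - Q) y :=
          ((hd1 y).hasFDerivAt.sub_const l).sub Q.hasFDerivAt
        rw [this.fderiv]
        exact s2 y)
  have hquad : ∀ y, HasFDerivAt (fun x => (1 / 2 : ℝ) * Q x x) (Q y) y := by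
    intro y
    have h := (Q.hasFDerivAt_of_bilinear (hasFDerivAt_id y) (hasFDerivAt_id y)).const_mul
      (1 / 2 : ℝ)
    refine h.congr_fderiv ?_
    ext v
    simp [hsymm v y]
    ring
  have hF : ∀ y, HasFDerivAt (fun x => f x - f 0 - l x - 1 / 2 * Q x x)
      (fderiv ℝ f y - l - Q y) y := fun y =>
    (((hd0 y).hasFDerivAt.sub_const (f 0)).sub l.hasFDerivAt).sub (hquad y)
  have s0 : ∀ x, ‖f x - f 0 - l x - 1 / 2 * Q x x‖ ≤ C * ‖x‖ ^ 3 * (1 + ‖x‖) ^ m :=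
    norm_le_of_fderiv_growth (F := fun x => f x - f 0 - l x - 1 / 2 * Q x x)
      (fun y => (hF y).differentiableAt) (by simp) hC0 (by
        intro y
        rw [(hF y).fderiv]
        exact s1 y)
  have hA := norm_nonneg l
  have hB := norm_nonneg Q
  have hQx : ∀ x, |1 / 2 * Q x x| ≤ ‖Q‖ * ‖x‖ ^ 2 := fun x => by
    rw [abs_mul]
    have h1 := abs_quad_le Q x x
    have h2 := abs_nonneg (Q x x)
    norm_num
    nlinarith
  have hlx : ∀ x, |l x| ≤ ‖l‖ * ‖x‖ := fun x => l.le_opNorm x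
  have hone : ∀ (x : E) (k : ℕ), 1 ≤ (1 + ‖x‖) ^ k := fun x k =>
    one_le_pow₀ (by linarith [norm_nonneg x])
  have hsec : ∀ x, |f x - f 0 - l x| ≤ (‖Q‖ + C) * ‖x‖ ^ 2 * (1 + ‖x‖) ^ (m + 1) := by
    intro x
    have hx := norm_nonneg x
    calc |f x - f 0 - l x| = |1 / 2 * Q x x + (f x - f 0 - l x - 1 / 2 * Q x x)| := by
          congr 1; ring
      _ ≤ ‖Q‖ * ‖x‖ ^ 2 + C * ‖x‖ ^ 3 * (1 + ‖x‖) ^ m :=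
          (abs_add_le _ _).trans (add_le_add (hQx x) (s0 x))
      _ ≤ ‖Q‖ * ‖x‖ ^ 2 * (1 + ‖x‖) ^ (m + 1) + C * ‖x‖ ^ 2 * (1 + ‖x‖) ^ (m + 1) := by
          refine add_le_add (le_mul_of_one_le_right (by positivity) (hone x _)) ?_
          rw [pow_succ ‖x‖ 2, pow_succ (1 + ‖x‖) m]
          have : 0 ≤ C * ‖x‖ ^ 2 * (1 + ‖x‖) ^ m := by positivity
          nlinarith
      _ = _ := by ring
  refine ⟨‖l‖ + ‖Q‖ + C, m + 2, by positivity, by linarith, by linarith, ?_, ?_, ?_⟩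
  · intro x
    have hx := norm_nonneg x
    calc |f x - f 0| = |l x + (f x - f 0 - l x)| := by congr 1; ring
      _ ≤ ‖l‖ * ‖x‖ + (‖Q‖ + C) * ‖x‖ ^ 2 * (1 + ‖x‖) ^ (m + 1) :=
          (abs_add_le _ _).trans (add_le_add (hlx x) (hsec x))
      _ ≤ ‖l‖ * ‖x‖ * (1 + ‖x‖) ^ (m + 2) + (‖Q‖ + C) * ‖x‖ * (1 + ‖x‖) ^ (m + 2) := by
          refine add_le_add (le_mul_of_one_le_right (by positivity) (hone x _)) ?_
          rw [pow_succ (1 + ‖x‖) (m + 1)]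
          have : 0 ≤ (‖Q‖ + C) * ‖x‖ * (1 + ‖x‖) ^ (m + 1) := by positivity
          nlinarith
      _ = _ := by ring
  · intro x
    refine (hsec x).trans ?_
    gcongr
    · linarith
    · linarith [norm_nonneg x]
    · norm_num
  · intro x
    refine (s0 x).trans ?_
    gcongr
    · linarith
    · linarith [norm_nonneg x]
    · norm_num

/-- Fourth-order control of a product of two centred observables: the leading part is the
quadratic `l l'` plus the odd cubic `l Q' / 2 + Q l' / 2`. -/
theorem TaylorBound.mul {E : Type*} [NormedAddCommGroup E] [NormedSpace ℝ E]
    {f g : E → ℝ} {l l' : E →L[ℝ] ℝ}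
    {Q Q' : E →L[ℝ] E →L[ℝ] ℝ} {K K' : ℝ} {m m' : ℕ}
    (hf : TaylorBound f l Q K m) (hg : TaylorBound g l' Q' K' m') (x : E) :
    |(f x - f 0) * (g x - g 0) - l x * l' x -
      (l x * (1 / 2 * Q' x x) + 1 / 2 * Q x x * l' x)| ≤
      3 * K * K' * ‖x‖ ^ 4 * (1 + ‖x‖) ^ (m + m') := by
  have hK := hf.nonneg
  have hK' := hg.nonneg
  have hx := norm_nonneg x
  have hone : ∀ k : ℕ, 1 ≤ (1 + ‖x‖) ^ k := fun k => one_le_pow₀ (by linarith)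
  have e1 : |(f x - f 0 - l x - 1 / 2 * Q x x) * (g x - g 0)| ≤
      K * K' * ‖x‖ ^ 4 * (1 + ‖x‖) ^ (m + m') := by
    rw [abs_mul]
    refine (mul_le_mul (hf.third x) (hg.first x) (abs_nonneg _) (by positivity)).trans
      (le_of_eq ?_)
    ring
  have e2 : |l x * (g x - g 0 - l' x - 1 / 2 * Q' x x)| ≤
      K * K' * ‖x‖ ^ 4 * (1 + ‖x‖) ^ (m + m') := by
    rw [abs_mul]
    have h : |l x| ≤ K * ‖x‖ * (1 + ‖x‖) ^ m :=
      ((l.le_opNorm x).trans (mul_le_mul_of_nonneg_right hf.norm_l hx)).trans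
        (le_mul_of_one_le_right (by positivity) (hone m))
    refine (mul_le_mul h (hg.third x) (abs_nonneg _) (by positivity)).trans
      (le_of_eq ?_)
    ring
  have e3 : |1 / 2 * Q x x * (g x - g 0 - l' x)| ≤
      K * K' * ‖x‖ ^ 4 * (1 + ‖x‖) ^ (m + m') := by
    rw [abs_mul]
    have h : |1 / 2 * Q x x| ≤ K * ‖x‖ ^ 2 * (1 + ‖x‖) ^ m := by
      refine le_trans ?_ (le_mul_of_one_le_right (by positivity) (hone m))
      rw [abs_mul]
      have h1 := abs_quad_le Q x x
      have h2 := abs_nonneg (Q x x)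
      have h3 : ‖Q‖ * ‖x‖ ^ 2 ≤ K * ‖x‖ ^ 2 := by gcongr; exact hf.norm_Q
      norm_num
      nlinarith
    refine (mul_le_mul h (hg.second x) (abs_nonneg _) (by positivity)).trans
      (le_of_eq ?_)
    ring
  calc _ = |(f x - f 0 - l x - 1 / 2 * Q x x) * (g x - g 0)
        + l x * (g x - g 0 - l' x - 1 / 2 * Q' x x) + 1 / 2 * Q x x * (g x - g 0 - l' x)| := by
        congr 1; ring
    _ ≤ _ := abs_add_three _ _ _
    _ ≤ _ := by linarith

/-! ### The acceptance probability -/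

/-- Any point can be translated by a period into the ball of radius `n L`, which is compact. -/
theorem bounded_of_periodic {n : ℕ} {X : Type*} [NormedAddCommGroup X] {L : ℝ} (hL : 0 < L)
    {F : En n → X} (hF : Continuous F)
    (hper : ∀ (q : En n) (i : Fin n), F (q + L • EuclideanSpace.single i (1 : ℝ)) = F q) :
    ∃ B, 0 ≤ B ∧ ∀ q, ‖F q‖ ≤ B := by
  obtain ⟨B, hB⟩ := (isCompact_closedBall (0 : En n) (n * L)).exists_bound_of_continuousOn
    hF.continuousOn
  have hz : ∀ k : Fin n → ℤ, ∀ s : Finset (Fin n),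
      Function.Periodic F (∑ i ∈ s, k i • (L • EuclideanSpace.single i (1 : ℝ))) := by
    intro k s
    induction s using Finset.cons_induction with
    | empty => simp [Function.Periodic]
    | cons a s ha ih =>
      rw [Finset.sum_cons]
      exact Function.Periodic.add_period
        (Function.Periodic.zsmul (fun q => hper q a) (k a)) ih
  have hall : ∀ q, ‖F q‖ ≤ B := by
    intro q
    set k : Fin n → ℤ := fun i => ⌊q i / L⌋
    set v : En n := ∑ i, (Int.fract (q i / L) * L) • EuclideanSpace.single i (1 : ℝ) with hv
    have hq : q = v + ∑ i, k i • (L • EuclideanSpace.single i (1 : ℝ)) := by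
      rw [hv, ← Finset.sum_add_distrib]
      have h := (EuclideanSpace.basisFun (Fin n) ℝ).sum_repr q
      conv_lhs => rw [← h]
      refine Finset.sum_congr rfl fun i _ => ?_
      rw [← Int.cast_smul_eq_zsmul ℝ, smul_smul, ← add_smul, ← add_mul, Int.fract_add_floor,
        div_mul_cancel₀ _ hL.ne']
      simp
    have hvn : ‖v‖ ≤ n * L := by
      refine (norm_sum_le _ _).trans ?_
      calc ∑ i, ‖(Int.fract (q i / L) * L) • (EuclideanSpace.single i (1 : ℝ) : En n)‖
          ≤ ∑ _i : Fin n, L := by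
            refine Finset.sum_le_sum fun i _ => ?_
            rw [norm_smul, PiLp.norm_single, norm_one, mul_one, Real.norm_eq_abs,
              abs_of_nonneg (mul_nonneg (Int.fract_nonneg _) hL.le)]
            nlinarith [Int.fract_lt_one (q i / L)]
        _ = n * L := by simp
    rw [hq, hz k Finset.univ v]
    exact hB v (by simpa using hvn)
  exact ⟨B, (norm_nonneg _).trans (hall 0), hall⟩

theorem fderiv_periodic {E X : Type*} [NormedAddCommGroup E] [NormedSpace ℝ E]
    [NormedAddCommGroup X] [NormedSpace ℝ X] {F : E → X} {v : E}
    (h : ∀ q, F (q + v) = F q) (q : E) : fderiv ℝ F (q + v) = fderiv ℝ F q := by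
  rw [← fderiv_comp_add_right]
  congr 1
  exact funext h

theorem inner_gradient_eq {n : ℕ} (V : En n → ℝ) (q v : En n) :
    ⟪gradient V q, v⟫ = fderiv ℝ V q v := by
  rw [gradient, InnerProductSpace.toDual_symm_apply]

/-- The first two derivatives of `V` are continuous and periodic, hence bounded. -/
theorem exists_gradient_bounds {n : ℕ} {L : ℝ} (hL : 0 < L) {V : En n → ℝ}
    (hV : ContDiff ℝ (⊤ : ℕ∞) V)
    (hper : ∀ (q : En n) (i : Fin n), V (q + L • EuclideanSpace.single i (1 : ℝ)) = V q) :
    ∃ B K, 0 ≤ B ∧ 0 ≤ K ∧ (∀ q, ‖gradient V q‖ ≤ B) ∧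
      ∀ q q', ‖gradient V q' - gradient V q‖ ≤ K * ‖q' - q‖ := by
  have hV1 : ContDiff ℝ (⊤ : ℕ∞) (fderiv ℝ V) := hV.fderiv_right (by simp)
  have hV2 : ContDiff ℝ (⊤ : ℕ∞) (fderiv ℝ (fderiv ℝ V)) := hV1.fderiv_right (by simp)
  have hp1 := fun (q : En n) (i : Fin n) => fderiv_periodic (fun x => hper x i) q
  obtain ⟨B, hB0, hB⟩ := bounded_of_periodic hL hV1.continuous hp1
  obtain ⟨K, hK0, hK⟩ := bounded_of_periodic hL hV2.continuous
    (fun q i => fderiv_periodic (fun x => hp1 x i) q)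
  refine ⟨B, K, hB0, hK0, fun q => ?_, fun q q' => ?_⟩
  · rw [gradient, LinearIsometryEquiv.norm_map]
    exact hB q
  · rw [gradient, gradient, ← map_sub, LinearIsometryEquiv.norm_map]
    exact convex_univ.norm_image_sub_le_of_norm_fderiv_le (𝕜 := ℝ)
      (fun x _ => hV1.differentiable (by simp) x) (fun x _ => hK x) (Set.mem_univ _)
      (Set.mem_univ _)

theorem continuous_gradient {n : ℕ} {V : En n → ℝ} (hV : ContDiff ℝ (⊤ : ℕ∞) V) :
    Continuous (gradient V) :=
  (InnerProductSpace.toDual ℝ (En n)).symm.continuous.comp (hV.continuous_fderiv (by simp))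

/-- Error of the trapezoidal rule for `∇V` along the segment from `q` to `q'`, to the order given by
a Lipschitz gradient. -/
theorem trapezoid_bound {n : ℕ} {V : En n → ℝ} (hV : ContDiff ℝ (⊤ : ℕ∞) V) {K : ℝ}
    (hK0 : 0 ≤ K) (hK : ∀ q q', ‖gradient V q' - gradient V q‖ ≤ K * ‖q' - q‖) (q q' : En n) :
    |V q - V q' + 1 / 2 * ⟪q' - q, gradient V q + gradient V q'⟫| ≤ 2 * K * ‖q' - q‖ ^ 2 := by
  have h1 : ‖V q' - V q - fderiv ℝ V q (q' - q)‖ ≤ K * ‖q' - q‖ * ‖q' - q‖ := by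
    refine (convex_closedBall q ‖q' - q‖).norm_image_sub_le_of_norm_fderiv_le' (𝕜 := ℝ)
      (fun x _ => hV.differentiable (by simp) x) (fun x hx => ?_) (by simp)
      (by simp [dist_eq_norm])
    have h := hK q x
    rw [gradient, gradient, ← map_sub, LinearIsometryEquiv.norm_map] at h
    refine h.trans ?_
    have : ‖x - q‖ ≤ ‖q' - q‖ := by simpa [dist_eq_norm] using hx
    gcongr
  have h2 : |⟪q' - q, gradient V q' - gradient V q⟫| ≤ ‖q' - q‖ * (K * ‖q' - q‖) :=
    (abs_real_inner_le_norm _ _).trans (by gcongr; exact hK q q')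
  rw [Real.norm_eq_abs, ← inner_gradient_eq, real_inner_comm] at h1
  rw [inner_sub_right] at h2
  rw [inner_add_right]
  rw [abs_le] at *
  constructor <;> nlinarith [sq_nonneg ‖q' - q‖, mul_nonneg hK0 (sq_nonneg ‖q' - q‖)]

theorem Rk_nonneg {n : ℕ} (V : En n → ℝ) {dt : ℝ} (hdt : 0 < dt) (q q' : En n) :
    0 ≤ Rk V dt q q' := by
  have := Real.pi_pos
  unfold Rk Tker
  positivity

theorem Rk_le_one {n : ℕ} (V : En n → ℝ) (dt : ℝ) (q q' : En n) : Rk V dt q q' ≤ 1 :=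
  min_le_left _ _

/-- The Metropolis ratio is the exponential of the trapezoidal error plus a term of order `dt`. -/
theorem Rk_eq {n : ℕ} (V : En n → ℝ) {dt : ℝ} (hdt : 0 < dt) (q q' : En n) :
    Rk V dt q q' = min 1 (Real.exp (V q - V q' +
      1 / 2 * ⟪q' - q, gradient V q + gradient V q'⟫ +
      dt / 4 * (‖gradient V q‖ ^ 2 - ‖gradient V q'‖ ^ 2))) := by
  have hp : (4 * Real.pi * dt) ^ (-(n : ℝ) / 2) ≠ 0 := by
    have := Real.pi_pos
    positivity
  unfold Rk Tker
  congr 1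
  rw [mul_left_comm, mul_left_comm (Real.exp (-V q)), mul_div_mul_left _ _ hp, ← Real.exp_add,
    ← Real.exp_add, ← Real.exp_sub]
  congr 1
  have e1 : ‖q - q' + dt • gradient V q'‖ ^ 2 = ‖q' - q‖ ^ 2 -
      2 * dt * ⟪q' - q, gradient V q'⟫ + dt ^ 2 * ‖gradient V q'‖ ^ 2 := by
    rw [norm_add_sq_real, norm_smul, mul_pow, Real.norm_eq_abs, sq_abs, real_inner_smul_right,
      norm_sub_rev, ← neg_sub q' q, inner_neg_left]
    ring
  have e2 : ‖q' - q + dt • gradient V q‖ ^ 2 = ‖q' - q‖ ^ 2 +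
      2 * dt * ⟪q' - q, gradient V q⟫ + dt ^ 2 * ‖gradient V q‖ ^ 2 := by
    rw [norm_add_sq_real, norm_smul, mul_pow, Real.norm_eq_abs, sq_abs, real_inner_smul_right]
    ring
  rw [e1, e2, inner_add_right]
  field_simp
  ring

/-- The rejection probability is at most the absolute value of the log Metropolis ratio, which is
estimated by the trapezoidal rule and the bound on the gradient. -/
theorem one_sub_Rk_le {n : ℕ} {V : En n → ℝ} (hV : ContDiff ℝ (⊤ : ℕ∞) V) {B K : ℝ}
    (hK0 : 0 ≤ K) (hB : ∀ q, ‖gradient V q‖ ≤ B)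
    (hK : ∀ q q', ‖gradient V q' - gradient V q‖ ≤ K * ‖q' - q‖)
    {dt : ℝ} (hdt : 0 < dt) (q q' : En n) :
    1 - Rk V dt q q' ≤ 2 * K * ‖q' - q‖ ^ 2 + dt * B ^ 2 := by
  have hB0 : 0 ≤ B := (norm_nonneg _).trans (hB q)
  have hsq : ∀ x, ‖gradient V x‖ ^ 2 ≤ B ^ 2 := fun x => by
    have := hB x
    gcongr
  have ht := (abs_le.1 (trapezoid_bound hV hK0 hK q q')).1
  rw [Rk_eq V hdt]
  have h1 := hsq q'
  have h2 := sq_nonneg ‖gradient V q‖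
  have h3 : dt / 4 * (‖gradient V q‖ ^ 2 - ‖gradient V q'‖ ^ 2) ≥ - (dt * B ^ 2) := by
    nlinarith [mul_nonneg hdt.le (sq_nonneg B), mul_le_mul_of_nonneg_left h1 hdt.le,
      mul_nonneg hdt.le h2]
  obtain ⟨α, hα⟩ : ∃ α, α = V q - V q' + 1 / 2 * ⟪q' - q, gradient V q + gradient V q'⟫ +
      dt / 4 * (‖gradient V q‖ ^ 2 - ‖gradient V q'‖ ^ 2) := ⟨_, rfl⟩
  rw [← hα]
  have h4 := Real.add_one_le_exp α
  rcases min_cases 1 (Real.exp α) with ⟨h, _⟩ | ⟨h, _⟩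
  · rw [h]; nlinarith [sq_nonneg ‖q' - q‖, mul_nonneg hK0 (sq_nonneg ‖q' - q‖),
      mul_nonneg hdt.le (sq_nonneg B)]
  · rw [h]; linarith

/-! ### Moments of one Metropolized step -/

/-- The unmetropolized increment `-dt a + √(2 dt) x` with drift `-a` and noise `x`. -/
def stepInc {n : ℕ} (dt : ℝ) (a x : En n) : En n := (-dt) • a + Real.sqrt (2 * dt) • x

/-- An affine function of the size of the noise which dominates the increment. -/
def scale {n : ℕ} (A : ℝ) (x : En n) : ℝ := 2 * A * (1 + ‖x‖)

/-- What is used about one Metropolized step: the drift is bounded by `A - 2`, the acceptance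
probability `r` is continuous in the noise, and rejection has probability of order `dt`, up to a
polynomial factor. -/
structure MetroStep {n : ℕ} (A D dt : ℝ) (a : En n) (r : En n → ℝ) : Prop where
  norm_a : ‖a‖ + 2 ≤ A
  D_nonneg : 0 ≤ D
  dt_pos : 0 < dt
  dt_le : dt ≤ 1
  cont : Continuous r
  nonneg : ∀ x, 0 ≤ r x
  le_one : ∀ x, r x ≤ 1
  reject : ∀ x, 1 - r x ≤ dt * D * scale A x ^ 2

theorem integrable_of_scale {n : ℕ} {F : En n → ℝ} (hF : Continuous F) {A C : ℝ} {k : ℕ}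
    (h : ∀ x, |F x| ≤ C * scale A x ^ k) : Integrable F (gauss n) := by
  refine Integrable.mono' (g := fun x => C * scale A x ^ k) ?_ hF.aestronglyMeasurable
    (Filter.Eventually.of_forall h)
  simp only [scale, mul_pow _ (1 + ‖_‖)]
  exact ((integrable_gauss_moment n k).const_mul _).const_mul _

theorem abs_integral_le_of_scale {n : ℕ} {F : En n → ℝ} {A C : ℝ} {k : ℕ}
    (h : ∀ x, |F x| ≤ C * scale A x ^ k) :
    |∫ x, F x ∂(gauss n)| ≤ C * ∫ x : En n, scale A x ^ k ∂(gauss n) := by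
  rw [← integral_const_mul]
  refine norm_integral_le_of_norm_le (f := F) ?_ (Filter.Eventually.of_forall h)
  simp only [scale, mul_pow _ (1 + ‖_‖)]
  exact ((integrable_gauss_moment n k).const_mul _).const_mul _

theorem continuous_stepInc {n : ℕ} (dt : ℝ) (a : En n) : Continuous (stepInc dt a) := by
  unfold stepInc
  fun_prop

namespace MetroStep

variable {n : ℕ} {A D dt : ℝ} {a : En n} {r : En n → ℝ}

theorem two_le (h : MetroStep A D dt a r) : 2 ≤ A := by
  linarith [h.norm_a, norm_nonneg a]

theorem one_le_scale (h : MetroStep A D dt a r) (x : En n) : 1 ≤ scale A x := by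
  unfold scale
  nlinarith [h.two_le, norm_nonneg x, mul_nonneg (by linarith [h.two_le] : 0 ≤ A) (norm_nonneg x)]

theorem norm_stepInc_le (h : MetroStep A D dt a r) (x : En n) :
    ‖stepInc dt a x‖ ≤ Real.sqrt dt * (A * (1 + ‖x‖)) := by
  have hdt := h.dt_pos
  set s := Real.sqrt dt with hs
  have hs0 : 0 ≤ s := Real.sqrt_nonneg _
  have hss : s * s = dt := Real.mul_self_sqrt hdt.le
  have hs1 : s ≤ 1 := Real.sqrt_le_one.2 h.dt_le
  have h2 : Real.sqrt 2 ≤ 2 := by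
    rw [Real.sqrt_le_left (by norm_num)]; norm_num
  have hx := norm_nonneg x
  have hna := norm_nonneg a
  have hsq : Real.sqrt (2 * dt) = Real.sqrt 2 * s := Real.sqrt_mul (by norm_num) _
  calc ‖stepInc dt a x‖ ≤ ‖(-dt) • a‖ + ‖Real.sqrt (2 * dt) • x‖ := norm_add_le _ _
    _ = s * s * ‖a‖ + Real.sqrt 2 * s * ‖x‖ := by
        rw [norm_smul, norm_smul, norm_neg, Real.norm_of_nonneg hdt.le,
          Real.norm_of_nonneg (Real.sqrt_nonneg _), hsq, hss]
    _ ≤ s * 1 * ‖a‖ + 2 * s * ‖x‖ := by gcongr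
    _ ≤ s * (A * (1 + ‖x‖)) := by
        have h3 := h.norm_a
        have h4 : ‖a‖ + 2 * ‖x‖ ≤ A * (1 + ‖x‖) := by nlinarith [h.two_le]
        nlinarith [mul_le_mul_of_nonneg_left h4 hs0]

theorem stepInc_sq_le (h : MetroStep A D dt a r) (x : En n) :
    ‖stepInc dt a x‖ ^ 2 ≤ dt * scale A x ^ 2 := by
  have hA := h.two_le
  have h1 := h.norm_stepInc_le x
  have h2 := Real.sq_sqrt h.dt_pos.le
  calc ‖stepInc dt a x‖ ^ 2 ≤ (Real.sqrt dt * (A * (1 + ‖x‖))) ^ 2 := by gcongr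
    _ = dt * (A * (1 + ‖x‖)) ^ 2 := by rw [mul_pow, h2]
    _ ≤ dt * scale A x ^ 2 := by
        have := h.dt_pos
        unfold scale
        gcongr
        nlinarith [norm_nonneg x]

theorem one_add_stepInc_le (h : MetroStep A D dt a r) (x : En n) :
    1 + ‖stepInc dt a x‖ ≤ scale A x := by
  have hA := h.two_le
  have hs : Real.sqrt dt ≤ 1 := Real.sqrt_le_one.2 h.dt_le
  have h1 : ‖stepInc dt a x‖ ≤ 1 * (A * (1 + ‖x‖)) :=
    (h.norm_stepInc_le x).trans (by gcongr)
  unfold scale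
  nlinarith [norm_nonneg x]

theorem noise_sq_le (h : MetroStep A D dt a r) (x : En n) :
    ‖Real.sqrt (2 * dt) • x‖ ^ 2 ≤ dt * scale A x ^ 2 := by
  have hdt := h.dt_pos
  have hA := h.two_le
  rw [norm_smul, mul_pow, Real.norm_of_nonneg (Real.sqrt_nonneg _), Real.sq_sqrt (by positivity)]
  have : 2 * ‖x‖ ^ 2 ≤ scale A x ^ 2 := by
    have h1 : 2 * ‖x‖ ≤ scale A x := by
      unfold scale
      nlinarith [norm_nonneg x]
    nlinarith [norm_nonneg x]
  nlinarith

theorem integral_linear (h : MetroStep A D dt a r) (l : En n →L[ℝ] ℝ) :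
    Integrable (fun x => l (stepInc dt a x)) (gauss n) ∧
      ∫ x, l (stepInc dt a x) ∂(gauss n) = -dt * l a := by
  have hi : Integrable (fun x => l x) (gauss n) :=
    integrable_of_scale (A := A) (C := ‖l‖) (k := 1) l.continuous fun x => by
      refine (l.le_opNorm x).trans ?_
      have := h.two_le
      unfold scale
      gcongr
      nlinarith [norm_nonneg x]
  have he : (fun x => l (stepInc dt a x)) = fun x => -dt * l a + Real.sqrt (2 * dt) * l x := by
    ext x
    simp [stepInc]
  rw [he]
  refine ⟨(integrable_const _).add (hi.const_mul _), ?_⟩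
  rw [integral_add (integrable_const _) (hi.const_mul _), integral_const_mul (Real.sqrt (2 * dt)),
    integral_gauss_odd (fun x => l x) (by simp)]
  simp

theorem integral_linear_mul (h : MetroStep A D dt a r) (u v : En n) :
    Integrable (fun x => ⟪u, stepInc dt a x⟫ * ⟪v, stepInc dt a x⟫) (gauss n) ∧
      ∫ x, ⟪u, stepInc dt a x⟫ * ⟪v, stepInc dt a x⟫ ∂(gauss n) =
        dt ^ 2 * (⟪u, a⟫ * ⟪v, a⟫) + 2 * dt * ⟪u, v⟫ := by
  have hA := h.two_le
  have hb : ∀ (w x : En n), |⟪w, x⟫| ≤ ‖w‖ * scale A x := fun w x => by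
    refine (abs_real_inner_le_norm w x).trans ?_
    unfold scale
    gcongr
    nlinarith [norm_nonneg x]
  have hi : ∀ w : En n, Integrable (fun x => ⟪w, x⟫) (gauss n) := fun w =>
    integrable_of_scale (A := A) (C := ‖w‖) (k := 1) (by fun_prop) fun x => by
      rw [pow_one]; exact hb w x
  have hi2 : Integrable (fun x => ⟪u, x⟫ * ⟪v, x⟫) (gauss n) :=
    integrable_of_scale (A := A) (C := ‖u‖ * ‖v‖) (k := 2) (by fun_prop) fun x => by
      rw [abs_mul]
      refine (mul_le_mul (hb u x) (hb v x) (abs_nonneg _) ((abs_nonneg _).trans (hb u x))).trans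
        (le_of_eq ?_)
      ring
  set s := Real.sqrt (2 * dt) with hs
  have hss : s ^ 2 = 2 * dt := Real.sq_sqrt (by linarith [h.dt_pos])
  have he : (fun x => ⟪u, stepInc dt a x⟫ * ⟪v, stepInc dt a x⟫) = fun x =>
      dt ^ 2 * (⟪u, a⟫ * ⟪v, a⟫) + (-dt * s * ⟪u, a⟫ * ⟪v, x⟫ + (-dt * s * ⟪v, a⟫ * ⟪u, x⟫
        + 2 * dt * (⟪u, x⟫ * ⟪v, x⟫))) := by
    ext x
    rw [← hss]
    simp only [stepInc, inner_add_right, real_inner_smul_right, ← hs]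
    ring
  have i3 := hi2.const_mul (2 * dt)
  have i2 := (hi u).const_mul (-dt * s * ⟪v, a⟫)
  have i1 := (hi v).const_mul (-dt * s * ⟪u, a⟫)
  have i23 := i2.fun_add i3
  have i123 := i1.fun_add i23
  rw [he]
  refine ⟨(integrable_const _).add i123, ?_⟩
  rw [integral_add (integrable_const _) i123, integral_add i1 i23,
    integral_add i2 i3, integral_const_mul (-dt * s * ⟪u, a⟫),
    integral_const_mul (-dt * s * ⟪v, a⟫), integral_const_mul (2 * dt),
    integral_gauss_inner_mul_inner, integral_gauss_odd (fun x => ⟪u, x⟫) (by simp),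
    integral_gauss_odd (fun x => ⟪v, x⟫) (by simp)]
  simp

variable {f g : En n → ℝ} {l l' : En n →L[ℝ] ℝ} {Q Q' : En n →L[ℝ] En n →L[ℝ] ℝ}
  {K K' : ℝ} {m m' : ℕ}

theorem abs_obs_le (h : MetroStep A D dt a r) (hf : TaylorBound f l Q K m) (x : En n) :
    |f (stepInc dt a x) - f 0| ≤ K * scale A x ^ (m + 1) := by
  have hK := hf.nonneg
  have h1 := h.one_add_stepInc_le x
  have h2 := norm_nonneg (stepInc dt a x)
  have h3 := h.one_le_scale x
  calc _ ≤ K * ‖stepInc dt a x‖ * (1 + ‖stepInc dt a x‖) ^ m := hf.first _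
    _ ≤ K * scale A x * scale A x ^ m := by gcongr; linarith
    _ = _ := by ring

theorem abs_accept_le (h : MetroStep A D dt a r) {t c : ℝ} (ht : |t| ≤ c) (x : En n) :
    |r x * t| ≤ c := by
  rw [abs_mul, abs_of_nonneg (h.nonneg x)]
  nlinarith [h.nonneg x, h.le_one x, abs_nonneg t]

theorem abs_reject_le (h : MetroStep A D dt a r) {t c : ℝ} (ht : |t| ≤ c) (x : En n) :
    |(1 - r x) * t| ≤ dt * D * scale A x ^ 2 * c := by
  rw [abs_mul, abs_of_nonneg (by linarith [h.le_one x])]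
  exact mul_le_mul (h.reject x) ht (abs_nonneg _)
    ((sub_nonneg.2 (h.le_one x)).trans (h.reject x))

theorem integrable_obs (h : MetroStep A D dt a r) (hf : TaylorBound f l Q K m)
    (hfc : Continuous f) :
    Integrable (fun x => r x * (f (stepInc dt a x) - f 0)) (gauss n) := by
  have hc := continuous_stepInc dt a
  have hr := h.cont
  exact integrable_of_scale (by fun_prop) fun x => h.abs_accept_le (h.abs_obs_le hf x) x

theorem integrable_obs_mul (h : MetroStep A D dt a r) (hf : TaylorBound f l Q K m)
    (hg : TaylorBound g l' Q' K' m') (hfc : Continuous f) (hgc : Continuous g) :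
    Integrable (fun x => r x * ((f (stepInc dt a x) - f 0) * (g (stepInc dt a x) - g 0)))
      (gauss n) := by
  have hc := continuous_stepInc dt a
  have hr := h.cont
  refine integrable_of_scale (A := A) (C := K * K') (k := m + 1 + (m' + 1)) (by fun_prop)
    fun x => h.abs_accept_le ?_ x
  rw [abs_mul]
  refine (mul_le_mul (h.abs_obs_le hf x) (h.abs_obs_le hg x) (abs_nonneg _)
    ((abs_nonneg _).trans (h.abs_obs_le hf x))).trans (le_of_eq ?_)
  ring

/-- The mean of a centred observable is of order `dt`: its linear part only sees the drift. -/
theorem abs_mean_le (h : MetroStep A D dt a r) (hf : TaylorBound f l Q K m)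
    (hfc : Continuous f) :
    |∫ x, r x * (f (stepInc dt a x) - f 0) ∂(gauss n)| ≤
      dt * (K * A + K * (1 + D) * ∫ x : En n, scale A x ^ (m + 3) ∂(gauss n)) := by
  have hK := hf.nonneg
  have hD := h.D_nonneg
  have hdt := h.dt_pos
  obtain ⟨hli, hl⟩ := h.integral_linear l
  have hW := h.integrable_obs hf hfc
  have hrem : ∀ x, |r x * (f (stepInc dt a x) - f 0) - l (stepInc dt a x)| ≤
      dt * (K * (1 + D)) * scale A x ^ (m + 3) := by
    intro x
    have hS := h.one_le_scale x
    have e1 : |f (stepInc dt a x) - f 0 - l (stepInc dt a x)| ≤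
        dt * K * scale A x ^ (m + 3) := by
      calc _ ≤ K * ‖stepInc dt a x‖ ^ 2 * (1 + ‖stepInc dt a x‖) ^ m := hf.second _
        _ ≤ K * (dt * scale A x ^ 2) * scale A x ^ m := by
            gcongr
            · exact h.stepInc_sq_le x
            · exact h.one_add_stepInc_le x
        _ = dt * K * scale A x ^ (m + 2) := by ring
        _ ≤ _ := by gcongr; norm_num
    have e2 := h.abs_reject_le (h.abs_obs_le hf x) x
    calc _ = |(f (stepInc dt a x) - f 0 - l (stepInc dt a x)) -
          (1 - r x) * (f (stepInc dt a x) - f 0)| := by congr 1; ring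
      _ ≤ _ := abs_sub _ _
      _ ≤ dt * K * scale A x ^ (m + 3) + dt * D * scale A x ^ 2 * (K * scale A x ^ (m + 1)) :=
          add_le_add e1 e2
      _ = _ := by ring
  have hsplit : ∫ x, r x * (f (stepInc dt a x) - f 0) ∂(gauss n) =
      ∫ x, (r x * (f (stepInc dt a x) - f 0) - l (stepInc dt a x)) ∂(gauss n) + -dt * l a := by
    rw [integral_sub hW hli, hl]
    ring
  have hla : |-dt * l a| ≤ dt * (K * A) := by
    rw [abs_mul, abs_neg, abs_of_pos hdt]
    have h1 : |l a| ≤ ‖l‖ * ‖a‖ := l.le_opNorm a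
    have h2 : ‖l‖ * ‖a‖ ≤ K * A := by
      gcongr
      · exact hf.norm_l
      · linarith [h.norm_a]
    exact mul_le_mul_of_nonneg_left (h1.trans h2) hdt.le
  rw [hsplit]
  refine (abs_add_le _ _).trans ((add_le_add (abs_integral_le_of_scale hrem) hla).trans
    (le_of_eq ?_))
  ring

/-- Lipschitz estimate for one summand of the odd cubic part of the product of two Taylor
expansions. -/
theorem abs_cubic_sub_le (hl : ‖l‖ ≤ K) (hQ : ‖Q'‖ ≤ K') {x y : En n} {t : ℝ}
    (hx : ‖x‖ ≤ t) (hy : ‖y‖ ≤ t) :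
    |l x * (1 / 2 * Q' x x) - l y * (1 / 2 * Q' y y)| ≤ 3 / 2 * (K * K') * ‖x - y‖ * t ^ 2 := by
  have hK := (norm_nonneg _).trans hl
  have hK' : 0 ≤ K' := le_trans (norm_nonneg Q') hQ
  have ht := (norm_nonneg _).trans hx
  have hlb : ∀ z, |l z| ≤ K * ‖z‖ := fun z =>
    (l.le_opNorm z).trans (by gcongr)
  have hQb : ∀ z w, |Q' z w| ≤ K' * ‖z‖ * ‖w‖ := fun z w =>
    (abs_quad_le Q' z w).trans (by gcongr)
  have e1 : |l (x - y) * Q' x x| ≤ K * ‖x - y‖ * (K' * t * t) := by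
    rw [abs_mul]
    exact mul_le_mul (hlb _) ((hQb x x).trans (by gcongr)) (abs_nonneg _) (by positivity)
  have e2 : |l y * Q' (x - y) x| ≤ K * t * (K' * ‖x - y‖ * t) := by
    rw [abs_mul]
    exact mul_le_mul ((hlb y).trans (by gcongr)) ((hQb _ x).trans (by gcongr)) (abs_nonneg _)
      (by positivity)
  have e3 : |l y * Q' y (x - y)| ≤ K * t * (K' * t * ‖x - y‖) := by
    rw [abs_mul]
    exact mul_le_mul ((hlb y).trans (by gcongr)) ((hQb y _).trans (by gcongr)) (abs_nonneg _)
      (by positivity)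
  have he : l x * (1 / 2 * Q' x x) - l y * (1 / 2 * Q' y y) =
      1 / 2 * (l (x - y) * Q' x x + l y * Q' (x - y) x + l y * Q' y (x - y)) := by
    simp only [map_sub, sub_apply]
    ring
  rw [he, abs_mul, abs_of_pos (by norm_num : (0 : ℝ) < 1 / 2)]
  have := abs_add_three (l (x - y) * Q' x x) (l y * Q' (x - y) x) (l y * Q' y (x - y))
  nlinarith

/-- The second moment of two centred observables, up to order `dt ^ 2`. The odd cubic Taylor term
evaluated at the pure noise averages to zero, so no `dt ^ (3 / 2)` contribution survives. -/
theorem abs_second_moment_le (h : MetroStep A D dt a r) (hf : TaylorBound f l Q K m)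
    (hg : TaylorBound g l' Q' K' m') (hfc : Continuous f) (hgc : Continuous g) {u v : En n}
    (hu : ∀ x, ⟪u, x⟫ = l x) (hv : ∀ x, ⟪v, x⟫ = l' x) :
    |∫ x, r x * ((f (stepInc dt a x) - f 0) * (g (stepInc dt a x) - g 0)) ∂(gauss n) -
      2 * dt * ⟪u, v⟫| ≤
      dt ^ 2 * (K * K' * A ^ 2 +
        K * K' * (6 + D) * ∫ x : En n, scale A x ^ (m + m' + 4) ∂(gauss n)) := by
  have hK := hf.nonneg
  have hK' := hg.nonneg
  have hD := h.D_nonneg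
  have hdt := h.dt_pos
  have hA := h.two_le
  obtain ⟨hli, hl⟩ := h.integral_linear_mul u v
  simp only [hu, hv] at hli hl
  have hW := h.integrable_obs_mul hf hg hfc hgc
  set s := Real.sqrt (2 * dt) with hs
  set c : En n → ℝ := fun x => l x * (1 / 2 * Q' x x) + 1 / 2 * Q x x * l' x with hc
  have hccont : Continuous c := by fun_prop
  have hrem : ∀ x, |r x * ((f (stepInc dt a x) - f 0) * (g (stepInc dt a x) - g 0)) -
      l (stepInc dt a x) * l' (stepInc dt a x) - c (s • x)| ≤
      dt ^ 2 * (K * K' * (6 + D)) * scale A x ^ (m + m' + 4) := by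
    intro x
    have hS := h.one_le_scale x
    have hS0 : 0 ≤ scale A x := by linarith
    have hsq := h.stepInc_sq_le x
    set d := stepInc dt a x with hd
    have e1 : |(f d - f 0) * (g d - g 0) - l d * l' d - c d| ≤
        3 * (K * K') * dt ^ 2 * scale A x ^ (m + m' + 4) := by
      calc _ ≤ 3 * K * K' * ‖d‖ ^ 4 * (1 + ‖d‖) ^ (m + m') := hf.mul hg d
        _ = 3 * K * K' * (‖d‖ ^ 2) ^ 2 * (1 + ‖d‖) ^ (m + m') := by ring
        _ ≤ 3 * K * K' * (dt * scale A x ^ 2) ^ 2 * scale A x ^ (m + m') := by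
            gcongr
            exact h.one_add_stepInc_le x
        _ = _ := by ring
    have e2 : |c d - c (s • x)| ≤ 3 * (K * K') * dt ^ 2 * scale A x ^ (m + m' + 4) := by
      set t := Real.sqrt (dt * scale A x ^ 2) with ht
      have hdt' : ‖d‖ ≤ t := Real.le_sqrt_of_sq_le hsq
      have hst : ‖s • x‖ ≤ t := Real.le_sqrt_of_sq_le (h.noise_sq_le x)
      have htt : t ^ 2 = dt * scale A x ^ 2 := Real.sq_sqrt (by positivity)
      have hdiff : ‖d - s • x‖ ≤ dt * scale A x := by
        have : d - s • x = (-dt) • a := by rw [hd, stepInc]; abel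
        rw [this, norm_smul, norm_neg, Real.norm_of_nonneg hdt.le]
        gcongr
        unfold scale
        nlinarith [h.norm_a, norm_nonneg x]
      have c1 := abs_cubic_sub_le hf.norm_l hg.norm_Q hdt' hst
      have c2 := abs_cubic_sub_le hg.norm_l hf.norm_Q hdt' hst
      calc |c d - c (s • x)| = |(l d * (1 / 2 * Q' d d) -
            l (s • x) * (1 / 2 * Q' (s • x) (s • x))) + (l' d * (1 / 2 * Q d d) -
            l' (s • x) * (1 / 2 * Q (s • x) (s • x)))| := by
            congr 1
            simp only [hc]
            ring
        _ ≤ _ := (abs_add_le _ _).trans (add_le_add c1 c2)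
        _ = 3 * (K * K') * ‖d - s • x‖ * t ^ 2 := by ring
        _ ≤ 3 * (K * K') * (dt * scale A x) * t ^ 2 := by gcongr
        _ = 3 * (K * K') * dt ^ 2 * scale A x ^ 3 := by rw [htt]; ring
        _ ≤ _ := by
            gcongr
            omega
    have e3 : |(1 - r x) * ((f d - f 0) * (g d - g 0))| ≤
        dt * D * scale A x ^ 2 * (K * K' * dt * scale A x ^ (m + m' + 2)) := by
      refine h.abs_reject_le ?_ x
      rw [abs_mul]
      calc _ ≤ (K * ‖d‖ * (1 + ‖d‖) ^ m) * (K' * ‖d‖ * (1 + ‖d‖) ^ m') :=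
            mul_le_mul (hf.first d) (hg.first d) (abs_nonneg _) (by positivity)
        _ = K * K' * ‖d‖ ^ 2 * (1 + ‖d‖) ^ (m + m') := by ring
        _ ≤ K * K' * (dt * scale A x ^ 2) * scale A x ^ (m + m') := by
            gcongr
            exact h.one_add_stepInc_le x
        _ = _ := by ring
    calc _ = |((f d - f 0) * (g d - g 0) - l d * l' d - c d) + (c d - c (s • x)) +
          -((1 - r x) * ((f d - f 0) * (g d - g 0)))| := by congr 1; ring
      _ ≤ _ := abs_add_three _ _ _
      _ ≤ _ := add_le_add (add_le_add e1 e2) ((abs_neg _).trans_le e3)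
      _ = _ := by ring
  have hsc : Continuous fun x : En n => c (s • x) := hccont.comp (by fun_prop)
  have hodd : ∫ x, c (s • x) ∂(gauss n) = 0 := integral_gauss_odd (fun x => c (s • x)) fun x => by
    simp only [hc, smul_neg, map_neg, neg_apply]
    ring
  have hci : Integrable (fun x => c (s • x)) (gauss n) := by
    refine integrable_of_scale (A := A) (C := 3 * (K * K')) (k := 3) hsc fun x => ?_
    have hx : ‖s • x‖ ≤ scale A x := by
      have h1 := h.noise_sq_le x
      have h2 := h.one_le_scale x
      refine abs_le_of_sq_le_sq' ?_ (by linarith) |>.2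
      nlinarith [h.dt_le, sq_nonneg (scale A x)]
    have h0 : ‖(0 : En n)‖ ≤ scale A x := by
      rw [norm_zero]
      linarith [h.one_le_scale x]
    have c1 := abs_cubic_sub_le hf.norm_l hg.norm_Q hx h0
    have c2 := abs_cubic_sub_le hg.norm_l hf.norm_Q hx h0
    simp only [map_zero, zero_mul, sub_zero] at c1 c2
    calc |c (s • x)| = |l (s • x) * (1 / 2 * Q' (s • x) (s • x)) +
          l' (s • x) * (1 / 2 * Q (s • x) (s • x))| := by
          congr 1
          simp only [hc]
          ring
      _ ≤ _ := (abs_add_le _ _).trans (add_le_add c1 c2)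
      _ = 3 * (K * K') * ‖s • x‖ * scale A x ^ 2 := by ring
      _ ≤ 3 * (K * K') * scale A x * scale A x ^ 2 := by gcongr
      _ = _ := by ring
  have hsplit : ∫ x, r x * ((f (stepInc dt a x) - f 0) * (g (stepInc dt a x) - g 0)) ∂(gauss n) =
      ∫ x, (r x * ((f (stepInc dt a x) - f 0) * (g (stepInc dt a x) - g 0)) -
        l (stepInc dt a x) * l' (stepInc dt a x) - c (s • x)) ∂(gauss n) +
      (dt ^ 2 * (l a * l' a) + 2 * dt * ⟪u, v⟫) := by
    have i1 : Integrable (fun x => r x * ((f (stepInc dt a x) - f 0) * (g (stepInc dt a x) - g 0)) -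
        l (stepInc dt a x) * l' (stepInc dt a x)) (gauss n) := hW.sub hli
    rw [integral_sub i1 hci, integral_sub hW hli, hl, hodd, hu]
    ring
  have hla : |dt ^ 2 * (l a * l' a)| ≤ dt ^ 2 * (K * K' * A ^ 2) := by
    rw [abs_mul, abs_of_nonneg (sq_nonneg dt), abs_mul]
    have haA : ‖a‖ ≤ A := by linarith [h.norm_a]
    have h1 : |l a| ≤ K * A := (l.le_opNorm a).trans (mul_le_mul hf.norm_l haA (norm_nonneg _) hK)
    have h2 : |l' a| ≤ K' * A :=
      (l'.le_opNorm a).trans (mul_le_mul hg.norm_l haA (norm_nonneg _) hK')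
    refine mul_le_mul_of_nonneg_left ((mul_le_mul h1 h2 (abs_nonneg _) (by positivity)).trans
      (le_of_eq ?_)) (sq_nonneg dt)
    ring
  rw [hsplit]
  calc _ = |∫ x, (r x * ((f (stepInc dt a x) - f 0) * (g (stepInc dt a x) - g 0)) -
        l (stepInc dt a x) * l' (stepInc dt a x) - c (s • x)) ∂(gauss n) +
        dt ^ 2 * (l a * l' a)| := by congr 1; ring
    _ ≤ _ := (abs_add_le _ _).trans (add_le_add (abs_integral_le_of_scale hrem) hla)
    _ = _ := by ring

end MetroStep

/-! ### The covariance of the Metropolized increment -/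

theorem integral_uniform_ite {r : ℝ} (h0 : 0 ≤ r) (h1 : r ≤ 1) (b c : ℝ) :
    ∫ u in Set.Icc (0 : ℝ) 1, (if u ≤ r then b else c) = r * b + (1 - r) * c := by
  have he : (fun u : ℝ => if u ≤ r then b else c) =
      fun u => (Set.Iic r).indicator (fun _ => b - c) u + c := by
    ext u
    by_cases hu : u ≤ r <;> simp [Set.indicator, hu]
  have hi : IntegrableOn (fun _ : ℝ => b - c) (Set.Icc 0 1) := by simp
  rw [he, integral_add (hi.indicator measurableSet_Iic) (by simp),
    setIntegral_indicator measurableSet_Iic]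
  have hs : Set.Icc (0 : ℝ) 1 ∩ Set.Iic r = Set.Icc 0 r := by
    ext u
    simp only [Set.mem_inter_iff, Set.mem_Icc, Set.mem_Iic]
    constructor
    · rintro ⟨⟨h, _⟩, h'⟩; exact ⟨h, h'⟩
    · rintro ⟨h, h'⟩; exact ⟨⟨h, h'.trans h1⟩, h'⟩
  rw [hs]
  simp [h0]
  ring

/-- Averaging over the uniform variable: the move is accepted with probability `Rk`. -/
theorem integral_deltaInc {n : ℕ} (V : En n → ℝ) {dt : ℝ} (hdt : 0 < dt) (φ : En n → ℝ)
    (q x : En n) :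
    ∫ u in Set.Icc (0 : ℝ) 1, φ (deltaInc V dt q x u) =
      Rk V dt q (propMove V dt q x) * φ (stepInc dt (gradient V q) x) +
        (1 - Rk V dt q (propMove V dt q x)) * φ 0 := by
  rw [← integral_uniform_ite (Rk_nonneg V hdt _ _) (Rk_le_one V dt _ _)]
  congr 1
  ext u
  unfold deltaInc
  split_ifs <;> rfl

/-- The covariance in terms of observables centred at their value for a rejected move. -/
theorem obscov_eq {n : ℕ} {V : En n → ℝ} {dt : ℝ} (hdt : 0 < dt) {f g : En n → ℝ} {q : En n}
    {d : En n → En n} {r : En n → ℝ} (hd : d = stepInc dt (gradient V q))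
    (hr : r = fun x => Rk V dt q (propMove V dt q x))
    (hf : Integrable (fun x => r x * (f (d x) - f 0)) (gauss n))
    (hg : Integrable (fun x => r x * (g (d x) - g 0)) (gauss n))
    (hfg : Integrable (fun x => r x * ((f (d x) - f 0) * (g (d x) - g 0))) (gauss n)) :
    obscov V dt f g q = ∫ x, r x * ((f (d x) - f 0) * (g (d x) - g 0)) ∂(gauss n) -
      (∫ x, r x * (f (d x) - f 0) ∂(gauss n)) * ∫ x, r x * (g (d x) - g 0) ∂(gauss n) := by
  have hbar : ∀ φ : En n → ℝ, Integrable (fun x => r x * (φ (d x) - φ 0)) (gauss n) →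
      obsbar V dt φ q = φ 0 + ∫ x, r x * (φ (d x) - φ 0) ∂(gauss n) := by
    intro φ hφ
    have : ∀ x, ∫ u in Set.Icc (0 : ℝ) 1, φ (deltaInc V dt q x u) =
        φ 0 + r x * (φ (d x) - φ 0) := fun x => by
      rw [integral_deltaInc V hdt, hr, hd]; ring
    unfold obsbar
    simp_rw [this]
    rw [integral_add (integrable_const _) hφ]
    simp
  set w := ∫ x, r x * (f (d x) - f 0) ∂(gauss n) with hw
  set z := ∫ x, r x * (g (d x) - g 0) ∂(gauss n) with hz
  have : ∀ x, ∫ u in Set.Icc (0 : ℝ) 1, (f (deltaInc V dt q x u) - obsbar V dt f q) *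
      (g (deltaInc V dt q x u) - obsbar V dt g q) =
      r x * ((f (d x) - f 0) * (g (d x) - g 0)) - w * (r x * (g (d x) - g 0)) -
        z * (r x * (f (d x) - f 0)) + w * z := fun x => by
    rw [integral_deltaInc V hdt
      (fun y => (f y - obsbar V dt f q) * (g y - obsbar V dt g q)), hbar f hf, hbar g hg, ← hw,
      ← hz, hr, hd]
    ring
  unfold obscov
  simp_rw [this]
  have i1 : Integrable (fun x => r x * ((f (d x) - f 0) * (g (d x) - g 0)) -
      w * (r x * (g (d x) - g 0))) (gauss n) := hfg.sub (hg.const_mul w)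
  have i2 : Integrable (fun x => r x * ((f (d x) - f 0) * (g (d x) - g 0)) -
      w * (r x * (g (d x) - g 0)) - z * (r x * (f (d x) - f 0))) (gauss n) :=
    i1.sub (hf.const_mul z)
  rw [integral_add i2 (integrable_const _), integral_sub i1 (hf.const_mul z),
    integral_sub hfg (hg.const_mul w), integral_const_mul w, integral_const_mul z, ← hw, ← hz]
  simp
  ring

/-- A MALA step with globally bounded and Lipschitz gradient has rejection probability of order
`dt`. -/
theorem metroStep_mala {n : ℕ} {V : En n → ℝ} (hV : ContDiff ℝ (⊤ : ℕ∞) V) {B K : ℝ}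
    (hK0 : 0 ≤ K) (hB : ∀ q, ‖gradient V q‖ ≤ B)
    (hK : ∀ q q', ‖gradient V q' - gradient V q‖ ≤ K * ‖q' - q‖)
    {dt : ℝ} (hdt : 0 < dt) (hdt1 : dt ≤ 1) (q : En n) :
    MetroStep (B + 2) (2 * K + 1) dt (gradient V q)
      (fun x => Rk V dt q (propMove V dt q x)) := by
  have hB0 : 0 ≤ B := (norm_nonneg _).trans (hB q)
  -- The increment bound does not involve the acceptance probability, so it can be read off from
  -- the step that is always accepted.
  have haux : MetroStep (B + 2) 0 dt (gradient V q) (fun _ => 1) :=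
    { norm_a := by linarith [hB q]
      D_nonneg := le_rfl
      dt_pos := hdt
      dt_le := hdt1
      cont := continuous_const
      nonneg := fun _ => zero_le_one
      le_one := fun _ => le_rfl
      reject := fun _ => by simp }
  refine
    { norm_a := haux.norm_a
      D_nonneg := by linarith
      dt_pos := hdt
      dt_le := hdt1
      cont := ?_
      nonneg := fun x => Rk_nonneg V hdt _ _
      le_one := fun x => Rk_le_one V dt _ _
      reject := fun x => ?_ }
  · simp_rw [Rk_eq V hdt]
    have h1 := continuous_gradient hV
    have h2 := hV.continuous
    have h3 : Continuous (propMove V dt q) := by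
      unfold propMove
      fun_prop
    fun_prop
  · have h1 := one_sub_Rk_le hV hK0 hB hK hdt q (propMove V dt q x)
    have h2 : propMove V dt q x - q = stepInc dt (gradient V q) x := by
      rw [propMove, stepInc, neg_smul]
      abel
    rw [h2] at h1
    have h3 := haux.stepInc_sq_le x
    have h4 : B ^ 2 ≤ scale (B + 2) x ^ 2 := by
      have : B ≤ scale (B + 2) x := by
        unfold scale
        nlinarith [norm_nonneg x]
      gcongr
    calc _ ≤ _ := h1
      _ ≤ 2 * K * (dt * scale (B + 2) x ^ 2) + dt * scale (B + 2) x ^ 2 := by gcongr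
      _ = _ := by ring

theorem stmt16 (n : ℕ) (hn : 1 ≤ n) (L : ℝ) (hL : 0 < L)
    (V : En n → ℝ) (hV : ContDiff ℝ (⊤ : ℕ∞) V)
    (hper : ∀ (q : En n) (i : Fin n), V (q + L • EuclideanSpace.single i (1 : ℝ)) = V q)
    (f g : En n → ℝ) (hf : ContDiff ℝ (⊤ : ℕ∞) f) (hg : ContDiff ℝ (⊤ : ℕ∞) g)
    (hfgrowth : ∀ k : ℕ, ∃ (Ck : ℝ) (m : ℕ), ∀ x : En n,
      ‖iteratedFDeriv ℝ k f x‖ ≤ Ck * (1 + ‖x‖) ^ m)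
    (hggrowth : ∀ k : ℕ, ∃ (Ck : ℝ) (m : ℕ), ∀ x : En n,
      ‖iteratedFDeriv ℝ k g x‖ ≤ Ck * (1 + ‖x‖) ^ m) :
    ∃ C ≥ (0 : ℝ), ∃ dts > (0 : ℝ), ∀ dt : ℝ, 0 < dt → dt ≤ dts → ∀ q : En n,
      |dt⁻¹ * obscov V dt f g q - 2 * ⟪gradient f 0, gradient g 0⟫| ≤ C * dt := by
  obtain ⟨B, KV, hB0, hK0, hB, hK⟩ := exists_gradient_bounds hL hV hper
  obtain ⟨Kf, mf, hTf⟩ := exists_taylorBound f hf hfgrowth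
  obtain ⟨Kg, mg, hTg⟩ := exists_taylorBound g hg hggrowth
  have hKf := hTf.nonneg
  have hKg := hTg.nonneg
  set J : ℕ → ℝ := fun k => ∫ x : En n, scale (B + 2) x ^ k ∂(gauss n) with hJ
  have hJ0 : ∀ k, 0 ≤ J k := fun k => integral_nonneg fun x => by
    have := norm_nonneg x
    unfold scale
    positivity
  set Cf := Kf * (B + 2) + Kf * (1 + (2 * KV + 1)) * J (mf + 3) with hCf
  set Cg := Kg * (B + 2) + Kg * (1 + (2 * KV + 1)) * J (mg + 3) with hCg
  set C2 := Kf * Kg * (B + 2) ^ 2 + Kf * Kg * (6 + (2 * KV + 1)) * J (mf + mg + 4) with hC2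
  have hf3 := hJ0 (mf + 3)
  have hg3 := hJ0 (mg + 3)
  have h24 := hJ0 (mf + mg + 4)
  have hCf0 : 0 ≤ Cf := by positivity
  have hCg0 : 0 ≤ Cg := by positivity
  have hC20 : 0 ≤ C2 := by positivity
  refine ⟨C2 + Cf * Cg, by positivity, 1, one_pos, fun dt hdt hdt1 q => ?_⟩
  have h := metroStep_mala hV hK0 hB hK hdt hdt1 q
  rw [obscov_eq hdt rfl rfl (h.integrable_obs hTf hf.continuous)
    (h.integrable_obs hTg hg.continuous)
    (h.integrable_obs_mul hTf hTg hf.continuous hg.continuous)]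
  have hw := h.abs_mean_le hTf hf.continuous
  have hz := h.abs_mean_le hTg hg.continuous
  have h2 := h.abs_second_moment_le hTf hTg hf.continuous hg.continuous
    (inner_gradient_eq f 0) (inner_gradient_eq g 0)
  have hwz := mul_le_mul hw hz (abs_nonneg _) (mul_nonneg hdt.le hCf0)
  rw [← abs_mul] at hwz
  have key := (abs_sub _ _).trans (add_le_add h2 hwz)
  have hcancel : ∀ I p c : ℝ, dt⁻¹ * (I - p) - 2 * c = dt⁻¹ * (I - 2 * dt * c - p) := by
    intro I p c
    field_simp
    ring
  rw [hcancel, abs_mul, abs_of_pos (inv_pos.2 hdt)]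
  calc _ ≤ dt⁻¹ * (dt ^ 2 * C2 + dt * Cf * (dt * Cg)) :=
        mul_le_mul_of_nonneg_left key (inv_pos.2 hdt).le
    _ = _ := by field_simp
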